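/- arXiv:2302.01587 — 4 statements merged into one kernel-verified Lean document; each statement's English description precedes it below -/
import Mathlib

section
/- If G is a finite connected simple graph with diam(G) ≥ 4, then gp_e(G) ≤ m(G) − 2. -/
/-!
A geodesic has as many edges as its length, and an edge general position set `X` contains at most
two of them. Counting the union of `X` with the edges of a diametral geodesic therefore gives
`|X| + diam G - 2 ≤ m(G)`.
-/

/-- `X` is an edge general position set of `G`: `X` consists of edges of `G` and every
shortest path of `G` contains at most two edges of `X`. -/
def SimpleGraph.IsEdgeGPSet {V : Type*} (G : SimpleGraph V) (X : Set (Sym2 V)) : Prop :=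
  X ⊆ G.edgeSet ∧
    ∀ (u v : V) (p : G.Walk u v), p.IsPath → p.length = G.dist u v →
      (X ∩ {e | e ∈ p.edges}).ncard ≤ 2

/-- The edge general position number of `G`. -/
noncomputable def SimpleGraph.egp {V : Type*} (G : SimpleGraph V) : ℕ :=
  sSup {n | ∃ X : Set (Sym2 V), G.IsEdgeGPSet X ∧ X.ncard = n}

section

variable {V : Type*} {G : SimpleGraph V} {u v : V} {X : Set (Sym2 V)}

theorem isEdgeGPSet_empty : G.IsEdgeGPSet ∅ :=
  ⟨G.edgeSet.empty_subset, by simp⟩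

theorem exists_isEdgeGPSet_ncard_eq_egp (hE : G.edgeSet.Finite) :
    ∃ X, G.IsEdgeGPSet X ∧ X.ncard = G.egp := by
  refine Nat.sSup_mem (s := {n | ∃ X, G.IsEdgeGPSet X ∧ X.ncard = n})
    ⟨0, ∅, isEdgeGPSet_empty, Set.ncard_empty _⟩ ⟨G.edgeSet.ncard, ?_⟩
  rintro _ ⟨X, hX, rfl⟩
  exact Set.ncard_le_ncard hX.1 hE

theorem ncard_edgeSet_of_isTrail {p : G.Walk u v} (hp : p.IsTrail) :
    p.edgeSet.ncard = p.length := by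
  classical
  rw [← p.coe_edges_toFinset, Set.ncard_coe_finset,
    List.toFinset_card_of_nodup hp.edges_nodup, p.length_edges]

theorem ncard_add_length_le_of_isEdgeGPSet (hE : G.edgeSet.Finite) (hX : G.IsEdgeGPSet X)
    {p : G.Walk u v} (hp : p.length = G.dist u v) :
    X.ncard + p.length ≤ G.edgeSet.ncard + 2 := by
  have hpath : p.IsPath := p.isPath_of_length_eq_dist hp
  have hpE : p.edgeSet ⊆ G.edgeSet := p.edges_subset_edgeSet
  calc X.ncard + p.length
      = X.ncard + p.edgeSet.ncard := by rw [ncard_edgeSet_of_isTrail hpath.isTrail]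
    _ = (X ∪ p.edgeSet).ncard + (X ∩ p.edgeSet).ncard :=
        (Set.ncard_union_add_ncard_inter _ _ (hE.subset hX.1) (hE.subset hpE)).symm
    _ ≤ G.edgeSet.ncard + 2 :=
        add_le_add (Set.ncard_le_ncard (Set.union_subset hX.1 hpE) hE) (hX.2 u v p hpath hp)

theorem egp_add_dist_le (hE : G.edgeSet.Finite) (huv : G.Reachable u v) :
    G.egp + G.dist u v ≤ G.edgeSet.ncard + 2 := by
  obtain ⟨X, hX, hXcard⟩ := exists_isEdgeGPSet_ncard_eq_egp hE
  obtain ⟨p, hp⟩ := huv.exists_walk_length_eq_dist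
  rw [← hXcard, ← hp]
  exact ncard_add_length_le_of_isEdgeGPSet hE hX hp

theorem egp_le_of_diam_ge_four_general (hE : G.edgeSet.Finite) (hG : G.Connected) :
    G.egp + G.diam ≤ G.edgeSet.ncard + 2 := by
  have : Nonempty V := hG.nonempty
  obtain ⟨u, v, huv⟩ := G.exists_dist_eq_diam
  exact huv ▸ egp_add_dist_le hE (hG u v)

end

/-- If `G` is a finite connected graph with `diam(G) ≥ 4`, then
`gp_e(G) ≤ m(G) - 2`. -/
theorem egp_le_of_diam_ge_four {V : Type*} [Fintype V] (G : SimpleGraph V)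
    (hG : G.Connected) (hd : 4 ≤ G.diam) :
    G.egp ≤ G.edgeSet.ncard - 2 := by
  have hbound : G.egp + G.diam ≤ G.edgeSet.ncard + 2 :=
    egp_le_of_diam_ge_four_general G.edgeSet.toFinite hG
  omega
end

section
/- Let G₀, G₁, G₂ be finite simple graphs (not necessarily connected) with G₁ and G₂ nonempty, and let G be the graph obtained from the disjoint union of G₀, G₁, G₂ and an edge x₁x₂ by adding all edges between {x₁, x₂} and the vertices of G₀, all edges between x₁ and the vertices of G₁, and all edges between x₂ and the vertices of G₂. Then gp_e(G) = m(G) − 1; in particular, every shortest path of G of length 3 passes through the edge x₁x₂, and E(G) \ {x₁x₂} is an edge general position set of G. -/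
/-- The graph obtained from the disjoint union of `G₀`, `G₁`, `G₂` and an edge `x₁x₂`
(here `x₁ = Sum.inr true`, `x₂ = Sum.inr false`) by joining both `x₁` and `x₂` to all
vertices of `G₀`, joining `x₁` to all vertices of `G₁`, and joining `x₂` to all
vertices of `G₂`. -/
def centralEdgeJoin {V₀ V₁ V₂ : Type*} (G₀ : SimpleGraph V₀) (G₁ : SimpleGraph V₁)
    (G₂ : SimpleGraph V₂) : SimpleGraph ((V₀ ⊕ V₁ ⊕ V₂) ⊕ Bool) :=
  SimpleGraph.fromRel (fun a b =>
    match a, b with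
    | Sum.inl (Sum.inl x), Sum.inl (Sum.inl y) => G₀.Adj x y
    | Sum.inl (Sum.inr (Sum.inl x)), Sum.inl (Sum.inr (Sum.inl y)) => G₁.Adj x y
    | Sum.inl (Sum.inr (Sum.inr x)), Sum.inl (Sum.inr (Sum.inr y)) => G₂.Adj x y
    | Sum.inl (Sum.inl _), Sum.inr _ => True
    | Sum.inl (Sum.inr (Sum.inl _)), Sum.inr b => b = true
    | Sum.inl (Sum.inr (Sum.inr _)), Sum.inr b => b = false
    | Sum.inr _, Sum.inr _ => True
    | _, _ => False)

/-!
Let the side of `x₁` consist of `x₁` and the vertices outside the closed neighbourhood of `x₂`, and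
symmetrically for `x₂`. Every vertex is within distance 1 of `x₁` or `x₂`, so distances are at most
3, and two vertices at distance 3 are private neighbours of `x₁` and of `x₂`, respectively. A path
`a, p, q, b` between such vertices has `p` on the side of `x₁` and `q` on the side of `x₂`, and the
only edge between the two sides is `x₁x₂`. Hence a shortest path has at most two edges other than
`x₁x₂`, while a shortest path of length 3 exists and rules out `E(G)` itself.
-/

section EdgeGPSet

variable {V : Type*} {G : SimpleGraph V} {u v : V} {e : Sym2 V}

theorem isEdgeGPSet_edgeSet_sdiff_singleton (hdist : ∀ u v, G.dist u v ≤ 3)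
    (hmem : ∀ (u v : V) (p : G.Walk u v), p.length = G.dist u v → p.length = 3 → e ∈ p.edges) :
    G.IsEdgeGPSet (G.edgeSet \ {e}) := by
  classical
  refine ⟨Set.sdiff_subset, fun u v p _ hp => ?_⟩
  have hcard : p.edges.toFinset.card ≤ p.length :=
    (List.toFinset_card_le _).trans_eq p.length_edges
  have hsub : (G.edgeSet \ {e}) ∩ {f | f ∈ p.edges} ⊆ ↑(p.edges.toFinset.erase e) := by
    rintro f ⟨⟨_, hfe⟩, hfp⟩
    exact Finset.mem_coe.2 (Finset.mem_erase.2 ⟨hfe, List.mem_toFinset.2 hfp⟩)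
  calc ((G.edgeSet \ {e}) ∩ {f | f ∈ p.edges}).ncard
      ≤ (p.edges.toFinset.erase e).card := by
        simpa only [Set.ncard_coe_finset] using Set.ncard_le_ncard hsub (Finset.finite_toSet _)
    _ ≤ 2 := by
      have hlen : p.length ≤ 3 := hp.trans_le (hdist u v)
      rcases hlen.eq_or_lt with h3 | h3
      · rw [Finset.card_erase_of_mem (List.mem_toFinset.2 (hmem u v p hp h3))]
        lia
      · exact Finset.card_erase_le.trans (by lia)

theorem not_isEdgeGPSet_edgeSet_of_two_lt_dist (h : 2 < G.dist u v) :
    ¬ G.IsEdgeGPSet G.edgeSet := by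
  classical
  rintro ⟨_, hgp⟩
  have hreach : G.Reachable u v := .of_dist_ne_zero (by lia)
  obtain ⟨p, hpath, hlen⟩ := hreach.exists_path_of_dist
  have hsub : {e | e ∈ p.edges} ⊆ G.edgeSet := fun _ he => p.edges_subset_edgeSet he
  have hinter : G.edgeSet ∩ {e | e ∈ p.edges} = ↑p.edges.toFinset := by
    rw [Set.inter_eq_right.2 hsub, List.coe_toFinset]
  have hcard : p.edges.toFinset.card = G.dist u v := by
    rw [List.toFinset_card_of_nodup hpath.isTrail.edges_nodup, p.length_edges, hlen]
  have hle := hgp u v p hpath hlen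
  rw [hinter, Set.ncard_coe_finset, hcard] at hle
  lia

theorem egp_eq_ncard_edgeSet_sub_one (hfin : G.edgeSet.Finite) (he : e ∈ G.edgeSet)
    (hgp : G.IsEdgeGPSet (G.edgeSet \ {e})) (hnot : ¬ G.IsEdgeGPSet G.edgeSet) :
    G.egp = G.edgeSet.ncard - 1 := by
  refine IsGreatest.csSup_eq ⟨⟨_, hgp, Set.ncard_sdiff_singleton_of_mem he⟩, ?_⟩
  rintro _ ⟨X, hX, rfl⟩
  have hne : X ≠ G.edgeSet := fun h => hnot (h ▸ hX)
  exact Nat.le_sub_one_of_lt (Set.ncard_lt_ncard (hX.1.ssubset_of_ne hne) hfin)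

end EdgeGPSet

section CentralEdge

/-- The vertex `x` together with the vertices outside the closed neighbourhood of `y`, which is
encoded as the open ball of radius `2`. For a central edge `xy` this is `x` and its private
neighbours. -/
def centralSide {V : Type*} (G : SimpleGraph V) (x y : V) : Set V :=
  insert x (G.ball y 2)ᶜ

/-- Central edges `xy`, an intrinsic description of the edge `x₁x₂` of `centralEdgeJoin`: `G₁`, `G₂`
and `G₀` become the graphs induced on the vertices not in the closed neighbourhood of `y`, on those
not in the closed neighbourhood of `x`, and on the common neighbours of `x` and `y`. -/
structure IsCentralEdge {V : Type*} (G : SimpleGraph V) (x y : V) : Prop where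
  adj : G.Adj x y
  dominating (v : V) : v ∈ G.ball x 2 ∨ v ∈ G.ball y 2
  mem_left {a v : V} : a ∉ G.ball y 2 → G.Adj a v → v ∈ centralSide G x y
  mem_right {b v : V} : b ∉ G.ball x 2 → G.Adj b v → v ∈ centralSide G y x

variable {V : Type*} {G : SimpleGraph V} {x y a b u v c : V}

theorem edist_le_two_of_mem_ball (hu : u ∈ G.ball c 2) (hv : v ∈ G.ball c 2) :
    G.edist u v ≤ 2 := by
  rw [SimpleGraph.mem_ball, ENat.lt_two_iff] at hu hv
  calc G.edist u v ≤ G.edist u c + G.edist c v := G.edist_triangle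
    _ ≤ 1 + 1 := add_le_add hu (G.edist_comm.trans_le hv)
    _ = 2 := one_add_one_eq_two

namespace IsCentralEdge

theorem edist_le_three (h : IsCentralEdge G x y) (u v : V) : G.edist u v ≤ 3 := by
  have hfar {s t : V} (hs : s ∈ G.ball x 2) (ht : t ∈ G.ball y 2) : G.edist s t ≤ 3 := by
    rw [SimpleGraph.mem_ball, ENat.lt_two_iff] at hs ht
    calc G.edist s t ≤ G.edist s x + G.edist x t := G.edist_triangle
      _ ≤ G.edist s x + (G.edist x y + G.edist y t) := by gcongr; exact G.edist_triangle
      _ ≤ 1 + (1 + 1) := by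
        gcongr
        · exact (SimpleGraph.edist_eq_one_iff_adj.2 h.adj).le
        · exact G.edist_comm.trans_le ht
      _ = 3 := by norm_num
  have hnear {c : V} (hu : u ∈ G.ball c 2) (hv : v ∈ G.ball c 2) : G.edist u v ≤ 3 :=
    (edist_le_two_of_mem_ball hu hv).trans (by norm_num)
  rcases h.dominating u with hu | hu <;> rcases h.dominating v with hv | hv
  · exact hnear hu hv
  · exact hfar hu hv
  · exact G.edist_comm.trans_le (hfar hv hu)
  · exact hnear hu hv

theorem dist_le_three (h : IsCentralEdge G x y) (u v : V) : G.dist u v ≤ 3 :=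
  ENat.toNat_le_of_le_natCast (h.edist_le_three u v)

theorem notMem_ball_of_two_lt_dist (h : IsCentralEdge G x y) (huv : 2 < G.dist u v) :
    (u ∉ G.ball y 2 ∧ v ∉ G.ball x 2) ∨ (v ∉ G.ball y 2 ∧ u ∉ G.ball x 2) := by
  have hcommon (c : V) : ¬ (u ∈ G.ball c 2 ∧ v ∈ G.ball c 2) := fun hc =>
    huv.not_ge (ENat.toNat_le_of_le_natCast (edist_le_two_of_mem_ball hc.1 hc.2))
  have hu := h.dominating u
  have hv := h.dominating v
  have hx := hcommon x
  have hy := hcommon y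
  tauto

theorem disjoint_centralSide (h : IsCentralEdge G x y) :
    Disjoint (centralSide G x y) (centralSide G y x) := by
  have hx : x ∈ G.ball x 2 := SimpleGraph.mem_ball_self two_pos
  have hy : y ∈ G.ball y 2 := SimpleGraph.mem_ball_self two_pos
  refine Set.disjoint_left.2 ?_
  rintro v (rfl | hvy) (rfl | hvx)
  · exact h.adj.ne rfl
  · exact hvx hx
  · exact hvy hy
  · exact (h.dominating v).elim hvx hvy

theorem eq_and_eq_of_adj (h : IsCentralEdge G x y) (hu : u ∈ centralSide G x y)
    (hv : v ∈ centralSide G y x) (huv : G.Adj u v) : u = x ∧ v = y := by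
  have hdisj := Set.disjoint_left.1 h.disjoint_centralSide
  constructor
  · exact hu.resolve_right fun hu' => hdisj (h.mem_left hu' huv) hv
  · exact hv.resolve_right fun hv' => hdisj hu (h.mem_right hv' huv.symm)

theorem two_lt_dist (h : IsCentralEdge G x y) (ha : a ∉ G.ball y 2) (hb : b ∉ G.ball x 2) :
    2 < G.dist a b := by
  have hdisj := Set.disjoint_left.1 h.disjoint_centralSide
  have hlt : 2 < G.edist a b := by
    refine SimpleGraph.two_lt_edist_iff.2 ⟨?_, fun hab => ?_, ?_⟩
    · rintro rfl
      exact hdisj (.inr ha) (.inr hb)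
    · exact hdisj (h.mem_left ha hab) (.inr hb)
    · refine Set.eq_empty_of_forall_notMem fun c hc => ?_
      exact hdisj (h.mem_left ha hc.1) (h.mem_right hb hc.2)
  have hreach : G.Reachable a b := SimpleGraph.edist_ne_top_iff_reachable.1
    (ne_top_of_le_ne_top (ENat.natCast_ne_top 3) (h.edist_le_three a b))
  rw [← hreach.coe_dist_eq_edist] at hlt
  exact_mod_cast hlt

theorem mem_edges_of_notMem_ball (h : IsCentralEdge G x y) (ha : a ∉ G.ball y 2)
    (hb : b ∉ G.ball x 2) (p : G.Walk a b) (hp : p.length = 3) : s(x, y) ∈ p.edges := by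
  match p, hp with
  | .cons hau (.cons huv (.cons hvb .nil)), _ =>
    obtain ⟨rfl, rfl⟩ := h.eq_and_eq_of_adj (h.mem_left ha hau) (h.mem_right hb hvb.symm) huv
    simp

theorem mem_edges_of_length_eq_three (h : IsCentralEdge G x y) (p : G.Walk u v)
    (hp : p.length = G.dist u v) (h3 : p.length = 3) : s(x, y) ∈ p.edges := by
  rcases h.notMem_ball_of_two_lt_dist (u := u) (v := v) (by lia) with ⟨hu, hv⟩ | ⟨hv, hu⟩
  · exact h.mem_edges_of_notMem_ball hu hv p h3
  · simpa using h.mem_edges_of_notMem_ball hv hu p.reverse (p.length_reverse.trans h3)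

theorem isEdgeGPSet_edgeSet_sdiff_singleton (h : IsCentralEdge G x y) :
    G.IsEdgeGPSet (G.edgeSet \ {s(x, y)}) :=
  _root_.isEdgeGPSet_edgeSet_sdiff_singleton h.dist_le_three
    fun _ _ => h.mem_edges_of_length_eq_three

theorem egp_eq_ncard_edgeSet_sub_one (h : IsCentralEdge G x y) (hfin : G.edgeSet.Finite)
    (ha : a ∉ G.ball y 2) (hb : b ∉ G.ball x 2) : G.egp = G.edgeSet.ncard - 1 :=
  _root_.egp_eq_ncard_edgeSet_sub_one hfin h.adj h.isEdgeGPSet_edgeSet_sdiff_singleton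
    (not_isEdgeGPSet_edgeSet_of_two_lt_dist (h.two_lt_dist ha hb))

end IsCentralEdge

end CentralEdge

section CentralEdgeJoin

variable {V₀ V₁ V₂ : Type*} (G₀ : SimpleGraph V₀) (G₁ : SimpleGraph V₁) (G₂ : SimpleGraph V₂)

theorem centralEdgeJoin_notMem_ball_false_iff {v : (V₀ ⊕ V₁ ⊕ V₂) ⊕ Bool} :
    v ∉ (centralEdgeJoin G₀ G₁ G₂).ball (Sum.inr false) 2 ↔
      ∃ a, v = Sum.inl (Sum.inr (Sum.inl a)) := by
  rw [SimpleGraph.ball_two]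
  rcases v with (v | v | v) | (_ | _) <;> simp [centralEdgeJoin]

theorem centralEdgeJoin_notMem_ball_true_iff {v : (V₀ ⊕ V₁ ⊕ V₂) ⊕ Bool} :
    v ∉ (centralEdgeJoin G₀ G₁ G₂).ball (Sum.inr true) 2 ↔
      ∃ b, v = Sum.inl (Sum.inr (Sum.inr b)) := by
  rw [SimpleGraph.ball_two]
  rcases v with (v | v | v) | (_ | _) <;> simp [centralEdgeJoin]

theorem isCentralEdge_centralEdgeJoin :
    IsCentralEdge (centralEdgeJoin G₀ G₁ G₂) (Sum.inr true) (Sum.inr false) where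
  adj := by simp [centralEdgeJoin]
  dominating v := by
    by_contra! hv
    obtain ⟨b, rfl⟩ := (centralEdgeJoin_notMem_ball_true_iff G₀ G₁ G₂).1 hv.1
    obtain ⟨a, ha⟩ := (centralEdgeJoin_notMem_ball_false_iff G₀ G₁ G₂).1 hv.2
    simp at ha
  mem_left {_ v} ha hav := by
    obtain ⟨a, rfl⟩ := (centralEdgeJoin_notMem_ball_false_iff G₀ G₁ G₂).1 ha
    rw [centralSide, Set.mem_insert_iff, Set.mem_compl_iff,
      centralEdgeJoin_notMem_ball_false_iff]
    rcases v with (v | v | v) | (_ | _) <;> simp_all [centralEdgeJoin]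
  mem_right {_ v} hb hbv := by
    obtain ⟨b, rfl⟩ := (centralEdgeJoin_notMem_ball_true_iff G₀ G₁ G₂).1 hb
    rw [centralSide, Set.mem_insert_iff, Set.mem_compl_iff,
      centralEdgeJoin_notMem_ball_true_iff]
    rcases v with (v | v | v) | (_ | _) <;> simp_all [centralEdgeJoin]

end CentralEdgeJoin

/-- For finite graphs `G₀`, `G₁`, `G₂` (not necessarily connected) with `G₁`
and `G₂` nonempty, the graph `G` obtained by the central-edge join construction satisfies
`gp_e(G) = m(G) - 1`; in particular every shortest path of `G` of length 3 passes through
the central edge `x₁x₂`, and `E(G) \ {x₁x₂}` is an edge general position set of `G`. -/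
theorem egp_centralEdgeJoin {V₀ V₁ V₂ : Type*} [Fintype V₀] [Fintype V₁] [Fintype V₂]
    [Nonempty V₁] [Nonempty V₂]
    (G₀ : SimpleGraph V₀) (G₁ : SimpleGraph V₁) (G₂ : SimpleGraph V₂) :
    (centralEdgeJoin G₀ G₁ G₂).egp = (centralEdgeJoin G₀ G₁ G₂).edgeSet.ncard - 1 ∧
    (∀ (u v : (V₀ ⊕ V₁ ⊕ V₂) ⊕ Bool) (p : (centralEdgeJoin G₀ G₁ G₂).Walk u v),
      p.IsPath → p.length = (centralEdgeJoin G₀ G₁ G₂).dist u v → p.length = 3 →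
        s(Sum.inr true, Sum.inr false) ∈ p.edges) ∧
    (centralEdgeJoin G₀ G₁ G₂).IsEdgeGPSet
      ((centralEdgeJoin G₀ G₁ G₂).edgeSet \ {s(Sum.inr true, Sum.inr false)}) := by
  obtain ⟨a⟩ := ‹Nonempty V₁›
  obtain ⟨b⟩ := ‹Nonempty V₂›
  have hcentral := isCentralEdge_centralEdgeJoin G₀ G₁ G₂
  have ha := (centralEdgeJoin_notMem_ball_false_iff G₀ G₁ G₂).2 ⟨a, rfl⟩
  have hb := (centralEdgeJoin_notMem_ball_true_iff G₀ G₁ G₂).2 ⟨b, rfl⟩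
  exact ⟨hcentral.egp_eq_ncard_edgeSet_sub_one (Set.toFinite _) ha hb,
    fun _ _ p _ => hcentral.mem_edges_of_length_eq_three p,
    hcentral.isEdgeGPSet_edgeSet_sdiff_singleton⟩
end

section
/- If G is a finite connected simple graph that is not a tree (i.e., G contains a cycle), then gp_e(G) ≥ 3. -/
/-!
Call two edges `ab` and `zw` related when `d(a,z) + d(b,w) ≠ d(a,w) + d(b,z)`; this is the
Djoković–Winkler relation. Along a shortest path distances are differences of positions, so two
distinct edges of a shortest path are never related. On the other hand, an edge `ab` that is not a
bridge is related to another edge: a walk from `a` to `b` avoiding `ab` starts at a vertex closer to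
`a` than to `b` and ends at one that is not, and the edge along which it leaves the vertices closer
to `a` is related to `ab`.

So a graph with a cycle has two distinct edges that lie on no common shortest path, and these form
an edge general position set together with any third edge.
-/

open SimpleGraph

namespace EdgeGeneralPosition

variable {V : Type*} {G : SimpleGraph V}

lemma ncard_le_egp (hG : G.edgeSet.Finite) {X : Set (Sym2 V)} (hX : G.IsEdgeGPSet X) :
    X.ncard ≤ G.egp := by
  refine le_csSup ⟨G.edgeSet.ncard, ?_⟩ ⟨X, hX, rfl⟩
  rintro n ⟨Y, hY, rfl⟩
  exact Set.ncard_le_ncard hY.1 hG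

lemma three_le_encard_edgeSet_of_not_isAcyclic (h : ¬ G.IsAcyclic) : 3 ≤ G.edgeSet.encard := by
  classical
  obtain ⟨v, c, hc⟩ : ∃ (v : V) (c : G.Walk v v), c.IsCycle := by simpa [IsAcyclic] using h
  have hcard : c.edges.toFinset.card = c.length := by
    rw [List.toFinset_card_of_nodup hc.edges_nodup, c.length_edges]
  calc (3 : ℕ∞) ≤ (c.edges.toFinset.card : ℕ∞) := by exact_mod_cast hcard ▸ hc.three_le_length
    _ = (c.edges.toFinset : Set (Sym2 V)).encard := (Set.encard_coe_eq_coe_finsetCard _).symm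
    _ ≤ G.edgeSet.encard := Set.encard_le_encard fun e he ↦
      c.edges_subset_edgeSet (List.mem_toFinset.mp he)

lemma isEdgeGPSet_of_ncard_eq_three {X : Set (Sym2 V)} (hX : X ⊆ G.edgeSet) (hcard : X.ncard = 3)
    (h : ∀ (u v : V) (p : G.Walk u v), p.length = G.dist u v → ¬ X ⊆ {e | e ∈ p.edges}) :
    G.IsEdgeGPSet X := by
  refine ⟨hX, fun u v p _ hp ↦ ?_⟩
  have hfin : X.Finite := Set.finite_of_ncard_ne_zero (by omega)
  have hlt : (X ∩ {e | e ∈ p.edges}).ncard < X.ncard :=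
    Set.ncard_lt_ncard (Set.inter_ssubset_left_iff.mpr (h u v p hp)) hfin
  omega

lemma dist_getVert_getVert {u v : V} {p : G.Walk u v} (hp : p.length = G.dist u v) {i j : ℕ}
    (hi : i ≤ p.length) (hj : j ≤ p.length) :
    G.dist (p.getVert i) (p.getVert j) = Nat.dist i j := by
  wlog hij : i ≤ j generalizing i j
  · rw [dist_comm, Nat.dist_comm, this hj hi (le_of_not_ge hij)]
  have hsub : ((p.take j).drop i).IsSubwalk p :=
    (Walk.isSubwalk_drop _ i).trans (p.isSubwalk_take j)
  have hlen := length_eq_dist_of_subwalk hp hsub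
  rw [Walk.drop_length, Walk.take_length, Walk.take_getVert, min_eq_left hj,
    min_eq_right hij] at hlen
  rw [← hlen, Nat.dist_eq_sub_of_le hij]

/-- The Djoković–Winkler relation on the edges of `G`, which holds of no two distinct edges on a
common shortest path. Swapping the names of the two ends of `e` or of `f` only swaps the two sums,
so the labelling that the existential quantifiers choose is immaterial. -/
def DjokovicWinkler (G : SimpleGraph V) (e f : Sym2 V) : Prop :=
  ∃ a b z w, e = s(a, b) ∧ f = s(z, w) ∧ G.dist a z + G.dist b w ≠ G.dist a w + G.dist b z

lemma not_djokovicWinkler_of_mem_edges {u v : V} {p : G.Walk u v} (hp : p.length = G.dist u v)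
    {e f : Sym2 V} (he : e ∈ p.edges) (hf : f ∈ p.edges) (hne : e ≠ f) :
    ¬ DjokovicWinkler G e f := by
  rintro ⟨a, b, z, w, rfl, rfl, hsum⟩
  obtain ⟨i, hi, hab⟩ := p.mk_mem_edges_iff_exists.mp he
  obtain ⟨j, hj, hzw⟩ := p.mk_mem_edges_iff_exists.mp hf
  have hij : i ≠ j := fun h ↦ hne (by rw [← hab, ← hzw, h])
  have hdist : G.dist (p.getVert i) (p.getVert j) + G.dist (p.getVert (i + 1)) (p.getVert (j + 1)) =
      G.dist (p.getVert i) (p.getVert (j + 1)) + G.dist (p.getVert (i + 1)) (p.getVert j) := by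
    simp (disch := omega) only [dist_getVert_getVert hp, Nat.dist]
    omega
  rw [Sym2.eq_iff] at hab hzw
  rcases hab with ⟨rfl, rfl⟩ | ⟨rfl, rfl⟩ <;> rcases hzw with ⟨rfl, rfl⟩ | ⟨rfl, rfl⟩ <;> omega

lemma exists_djokovicWinkler_of_not_isBridge {e : Sym2 V} (he : e ∈ G.edgeSet)
    (hb : ¬ G.IsBridge e) : ∃ f ∈ G.edgeSet, e ≠ f ∧ DjokovicWinkler G e f := by
  induction e with | h a b
  obtain ⟨p, hp⟩ : ∃ p : G.Walk a b, s(a, b) ∉ p.edges := by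
    simpa [isBridge_iff_forall_walk_mem_edges] using hb
  have hab : G.dist a b = 1 := dist_eq_one_iff_adj.mpr he
  obtain ⟨d, hd, hfst, hsnd⟩ := p.exists_boundary_dart {x | G.dist a x < G.dist b x}
    (by simp [dist_comm (u := b), hab]) (by simp)
  have hmem : s(d.fst, d.snd) ∈ p.edges := List.mem_map_of_mem hd
  refine ⟨s(d.fst, d.snd), d.adj, fun h ↦ hp (h ▸ hmem), a, b, d.fst, d.snd, rfl, rfl, ?_⟩
  rw [Set.mem_ofPred_eq] at hfst hsnd
  omega

end EdgeGeneralPosition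

open EdgeGeneralPosition

theorem three_le_egp_of_not_acyclic_general {V : Type*} (G : SimpleGraph V) (h : ¬ G.IsAcyclic) :
    ∃ X : Set (Sym2 V), G.IsEdgeGPSet X ∧ X.ncard = 3 := by
  obtain ⟨e, he, hbridge⟩ : ∃ e ∈ G.edgeSet, ¬ G.IsBridge e := by
    simpa only [isAcyclic_iff_forall_isBridge, not_forall, exists_prop] using h
  obtain ⟨f, hf, hne, hrel⟩ := exists_djokovicWinkler_of_not_isBridge he hbridge
  obtain ⟨X, hefX, hX, hcard⟩ := Set.exists_superset_subset_encard_eq (k := 3)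
    (Set.pair_subset he hf) (by rw [Set.encard_pair hne]; norm_num)
    (three_le_encard_edgeSet_of_not_isAcyclic h)
  have hncard : X.ncard = 3 := by rw [Set.ncard, hcard]; rfl
  refine ⟨X, isEdgeGPSet_of_ncard_eq_three hX hncard fun u v p hp hXp ↦ ?_, hncard⟩
  have hef := Set.pair_subset_iff.mp (hefX.trans hXp)
  exact not_djokovicWinkler_of_mem_edges hp hef.1 hef.2 hne hrel

/-- If a finite connected graph `G` is not a tree (i.e. it contains a
cycle), then `gp_e(G) ≥ 3`. -/
theorem three_le_egp_of_not_acyclic {V : Type*} [Fintype V] (G : SimpleGraph V)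
    (hG : G.Connected) (h : ¬ G.IsAcyclic) :
    3 ≤ G.egp := by
  obtain ⟨X, hX, hcard⟩ := three_le_egp_of_not_acyclic_general G h
  exact hcard ▸ ncard_le_egp G.edgeSet.toFinite hX
end

section
/- Let G be a finite connected simple graph, let v be a vertex of G, and suppose there exist adjacent vertices u and w of G with d_G(v,u) = d_G(v,w) (i.e., some distance level of v is not an independent set). Then gp_e(G) ≥ deg_G(v) + 1; indeed, the edge uw together with the edges incident to v forms an edge general position set. -/
/-!
On a shortest path the distance between two vertices is the difference of their positions. Hence, if
`v` lies on the path, consecutive vertices have different distances from `v`, so a shortest path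
through an edge with ends equidistant from `v` avoids `v`, and therefore every edge at `v`. Any
other shortest path contains at most two edges at `v`, because it visits `v` at most once.
-/

namespace EdgeGeneralPosition

open SimpleGraph

variable {V : Type*} {G : SimpleGraph V} {a b u v w : V} {p : G.Walk a b}

theorem dist_getVert_getVert_s13 (hp : p.length = G.dist a b) {i j : ℕ} (hij : i ≤ j)
    (hj : j ≤ p.length) : G.dist (p.getVert i) (p.getVert j) = j - i := by
  have h := length_eq_dist_of_subwalk hp (((p.take j).isSubwalk_drop i).trans (p.isSubwalk_take j))
  rw [Walk.drop_length, Walk.take_length, Walk.take_getVert, min_eq_left hj, min_eq_right hij] at h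
  exact h.symm

theorem dist_getVert_ne_dist_getVert_succ (hp : p.length = G.dist a b) {k i : ℕ}
    (hk : k ≤ p.length) (hi : i < p.length) :
    G.dist (p.getVert k) (p.getVert i) ≠ G.dist (p.getVert k) (p.getVert (i + 1)) := by
  rcases le_or_gt k i with hki | hik
  · rw [dist_getVert_getVert_s13 hp hki hi.le, dist_getVert_getVert_s13 hp (hki.trans i.le_succ) hi]
    lia
  · rw [G.dist_comm, dist_getVert_getVert_s13 hp hik.le hk, G.dist_comm,
      dist_getVert_getVert_s13 hp hik hk]
    lia

theorem notMem_support_of_mk_mem_edges_of_dist_eq (hp : p.length = G.dist a b)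
    (huw : s(u, w) ∈ p.edges) (hd : G.dist v u = G.dist v w) : v ∉ p.support := by
  intro hv
  obtain ⟨k, rfl, hk⟩ := Walk.mem_support_iff_exists_getVert.1 hv
  obtain ⟨i, hi, h⟩ := p.mk_mem_edges_iff_exists.1 huw
  have hne := dist_getVert_ne_dist_getVert_succ hp hk hi
  rcases Sym2.eq_iff.1 h with ⟨rfl, rfl⟩ | ⟨rfl, rfl⟩
  · exact hne hd
  · exact hne hd.symm

theorem incidenceSet_inter_edges_eq_empty (hv : v ∉ p.support) :
    G.incidenceSet v ∩ {e | e ∈ p.edges} = ∅ :=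
  Set.eq_empty_of_forall_notMem fun _ he ↦ hv (p.mem_support_of_mem_edges he.2 he.1.2)

-- At an end of the path `getVert` repeats the end vertex, and one of the two pairs is a loop.
theorem incidenceSet_getVert_inter_edges_subset (hp : p.IsPath) {k : ℕ} (hk : k ≤ p.length) :
    G.incidenceSet (p.getVert k) ∩ {e | e ∈ p.edges} ⊆
      {s(p.getVert (k - 1), p.getVert k), s(p.getVert k, p.getVert (k + 1))} := by
  rintro e ⟨⟨-, hmem⟩, hpe⟩
  induction e with | _ x y
  obtain ⟨i, hi, h⟩ := p.mk_mem_edges_iff_exists.1 hpe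
  rw [← h] at hmem ⊢
  rcases Sym2.mem_iff.1 hmem with hki | hki
  · obtain rfl : k = i := hp.getVert_injOn hk hi.le hki
    simp
  · obtain rfl : k = i + 1 := hp.getVert_injOn hk hi hki
    simp

theorem ncard_incidenceSet_inter_edges_le_two (hp : p.IsPath) (v : V) :
    (G.incidenceSet v ∩ {e | e ∈ p.edges}).ncard ≤ 2 := by
  by_cases hv : v ∈ p.support
  · obtain ⟨k, rfl, hk⟩ := Walk.mem_support_iff_exists_getVert.1 hv
    calc
      _ ≤ Set.ncard {s(p.getVert (k - 1), p.getVert k), s(p.getVert k, p.getVert (k + 1))} :=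
        Set.ncard_le_ncard (incidenceSet_getVert_inter_edges_subset hp hk)
      _ ≤ Set.ncard {s(p.getVert k, p.getVert (k + 1))} + 1 := Set.ncard_insert_le _ _
      _ = 2 := by rw [Set.ncard_singleton]
  · simp [incidenceSet_inter_edges_eq_empty hv]

theorem isEdgeGPSet_insert_incidenceSet (huw : G.Adj u w) (hd : G.dist v u = G.dist v w) :
    G.IsEdgeGPSet (insert s(u, w) (G.incidenceSet v)) := by
  refine ⟨Set.insert_subset huw (G.incidenceSet_subset v), fun a b p hp hl ↦ ?_⟩
  by_cases he : s(u, w) ∈ p.edges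
  · have hv : v ∉ p.support := notMem_support_of_mk_mem_edges_of_dist_eq hl he hd
    rw [Set.insert_inter_of_mem (Set.mem_ofPred.2 he), incidenceSet_inter_edges_eq_empty hv]
    simp
  · rw [Set.insert_inter_of_notMem (mt Set.mem_ofPred.1 he)]
    exact ncard_incidenceSet_inter_edges_le_two hp v

theorem mk_notMem_incidenceSet_of_dist_eq (huw : G.Adj u w) (hd : G.dist v u = G.dist v w) :
    s(u, w) ∉ G.incidenceSet v := by
  intro h
  rcases (G.mk'_mem_incidenceSet_iff.1 h).2 with rfl | rfl
  · simp [dist_eq_one_iff_adj.2 huw] at hd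
  · simp [dist_eq_one_iff_adj.2 huw.symm] at hd

theorem ncard_incidenceSet (G : SimpleGraph V) (v : V) :
    (G.incidenceSet v).ncard = (G.neighborSet v).ncard := by
  classical exact Nat.card_congr (G.incidenceSetEquivNeighborSet v)

theorem isEdgeGPSet_of_subset {X Y : Set (Sym2 V)} (hY : G.IsEdgeGPSet Y) (hXY : X ⊆ Y) :
    G.IsEdgeGPSet X :=
  ⟨hXY.trans hY.1, fun a b p hp hl ↦
    (Set.ncard_le_ncard (Set.inter_subset_inter_left _ hXY)
      (p.edges.finite_toSet.inter_of_right Y)).trans (hY.2 a b p hp hl)⟩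

theorem finite_of_isEdgeGPSet (hG : BddAbove (Set.ncard '' {X | G.IsEdgeGPSet X}))
    {X : Set (Sym2 V)} (hX : G.IsEdgeGPSet X) : X.Finite := by
  obtain ⟨N, hN⟩ := hG
  by_contra hinf
  obtain ⟨Y, hYX, -, hY⟩ := Set.Infinite.exists_subset_ncard_eq hinf (N + 1)
  have : Y.ncard ≤ N := hN ⟨Y, isEdgeGPSet_of_subset hX hYX, rfl⟩
  lia

end EdgeGeneralPosition

-- Boundedness excludes the junk value `0` of `sSup` on an unbounded set of naturals.
open EdgeGeneralPosition in
theorem egp_ge_degree_succ_general {V : Type*} (G : SimpleGraph V) {v u w : V} (huw : G.Adj u w)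
    (hd : G.dist v u = G.dist v w) :
    (BddAbove (Set.ncard '' {X | G.IsEdgeGPSet X}) → (G.neighborSet v).ncard + 1 ≤ G.egp) ∧
      G.IsEdgeGPSet (insert s(u, w) (G.incidenceSet v)) := by
  have hgp := isEdgeGPSet_insert_incidenceSet huw hd
  refine ⟨fun hG ↦ le_csSup hG ⟨_, hgp, ?_⟩, hgp⟩
  have hfin : (G.incidenceSet v).Finite :=
    (finite_of_isEdgeGPSet hG hgp).subset (Set.subset_insert _ _)
  rw [Set.ncard_insert_of_notMem (mk_notMem_incidenceSet_of_dist_eq huw hd) hfin,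
    ncard_incidenceSet]

/-- If `G` is a finite connected graph, `v` a vertex, and `u`, `w` adjacent
vertices with `d_G(v,u) = d_G(v,w)` (a distance level of `v` is not independent), then
`gp_e(G) ≥ deg_G(v) + 1`; indeed the edge `uw` together with the edges incident to `v`
forms an edge general position set. -/
theorem egp_ge_degree_succ {V : Type*} [Fintype V] (G : SimpleGraph V) (hG : G.Connected)
    (v u w : V) (huw : G.Adj u w) (hd : G.dist v u = G.dist v w) :
    (G.neighborSet v).ncard + 1 ≤ G.egp ∧
      G.IsEdgeGPSet (insert s(u, w) (G.incidenceSet v)) :=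
  have h := egp_ge_degree_succ_general G huw hd
  ⟨h.1 (Set.toFinite _).bddAbove, h.2⟩
end
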